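/- arXiv:1410.2499 — 2 statements merged into one kernel-verified Lean document; each statement's English description precedes it below -/
import Mathlib

section
/- Any Moreau–Jean step whose local velocities and impulse satisfy the discrete contact conditions dissipates energy in the sense that E(q_{k+1},v_{k+1}) − E(q_k,v_k) ≤ W_ext + W_damp, provided 1/2 ≤ θ ≤ 1/(1+e^α) for every α ∈ I₁. -/
open Matrix

/-!
Testing the momentum equation against the intermediate velocity `v_{k+θ}` gives the energy balance
`ΔE = W_ext + W_damp + ⟨U_{k+θ}, P⟩ + (1/2 - θ) (⟨Δv, M Δv⟩ + ⟨Δq, K Δq⟩)`.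
The last term is numerical dissipation as soon as `1/2 ≤ θ`. For the contact term,
complementarity replaces `U_{k+1}` by `-e U_k` wherever an impulse acts, so that each contact
contributes `(1 - θ (1 + e)) U_k P`, which is nonpositive when `θ ≤ 1 / (1 + e)`.
-/

open AffineMap (lineMap lineMap_apply_module lineMap_apply_ring)

variable {R ι κ : Type*} [Fintype ι]

theorem dotProduct_mulVec_comm_of_isSymm [CommSemiring R] {A : Matrix ι ι R} (hA : A.IsSymm)
    (x y : ι → R) : x ⬝ᵥ A *ᵥ y = y ⬝ᵥ A *ᵥ x := by
  rw [← dotProduct_transpose_mulVec, hA.eq]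

theorem dotProduct_mulVec_self_sub_eq_lineMap [CommRing R] {A : Matrix ι ι R} (hA : A.IsSymm)
    (θ : R) (x y : ι → R) :
    y ⬝ᵥ A *ᵥ y - x ⬝ᵥ A *ᵥ x =
      2 * (lineMap x y θ ⬝ᵥ A *ᵥ (y - x)) + (1 - 2 * θ) * ((y - x) ⬝ᵥ A *ᵥ (y - x)) := by
  simp only [lineMap_apply_module, mulVec_sub, dotProduct_sub, sub_dotProduct, add_dotProduct,
    smul_dotProduct, smul_eq_mul]
  linear_combination dotProduct_mulVec_comm_of_isSymm hA y x

theorem mulVec_lineMap [CommRing R] (A : Matrix κ ι R) (x y : ι → R) (θ : R) :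
    A *ᵥ lineMap x y θ = lineMap (A *ᵥ x) (A *ᵥ y) θ :=
  A.mulVecLin.toAffineMap.apply_lineMap x y θ

theorem mul_le_one_of_le_one_div [Field R] [LinearOrder R] [IsStrictOrderedRing R] {a b : R}
    (ha : 0 < a) (hab : a ≤ 1 / b) : a * b ≤ 1 :=
  (le_div_iff₀ (one_div_pos.1 (ha.trans_le hab))).1 hab

section Impact

variable [CommRing R] [LinearOrder R] [IsStrictOrderedRing R] {θ : R}

theorem lineMap_mul_nonpos_of_restitution {e u u' p : R} (hθe : θ * (1 + e) ≤ 1) (hu : u ≤ 0)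
    (hp : 0 ≤ p) (hcompl : (u' + e * u) * p = 0) : lineMap u u' θ * p ≤ 0 :=
  calc lineMap u u' θ * p = (1 - θ * (1 + e)) * (u * p) := by
        rw [lineMap_apply_ring]
        linear_combination θ * hcompl
    _ ≤ 0 :=
      mul_nonpos_of_nonneg_of_nonpos (sub_nonneg.2 hθe) (mul_nonpos_of_nonpos_of_nonneg hu hp)

theorem lineMap_dotProduct_nonpos_of_restitution [Fintype κ] {e U U' P : κ → R} {I : Set κ}
    (hθe : ∀ α ∈ I, θ * (1 + e α) ≤ 1) (hU : ∀ α ∈ I, U α ≤ 0) (hP : ∀ α ∈ I, 0 ≤ P α)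
    (hcompl : ∀ α ∈ I, (U' α + e α * U α) * P α = 0) (hPout : ∀ α ∉ I, P α = 0) :
    lineMap U U' θ ⬝ᵥ P ≤ 0 := by
  refine Finset.sum_nonpos fun α _ ↦ ?_
  by_cases hα : α ∈ I
  · rw [AffineMap.pi_lineMap_apply]
    exact lineMap_mul_nonpos_of_restitution (hθe α hα) (hU α hα) (hP α hα) (hcompl α hα)
  · rw [hPout α hα, mul_zero]

end Impact

variable [Fintype κ]

section Step

variable [CommRing R]

/-- Work of the force `F` over a time step of length `h` at the constant velocity `w`; the scheme
evaluates it at `w = v_{k+θ}`. -/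
def externalWork (h : R) (F w : ι → R) : R :=
  h * (w ⬝ᵥ F)

/-- Work of the damping force `-C w` over a time step of length `h` at the constant velocity `w`;
the scheme evaluates it at `w = v_{k+θ}`. -/
def dampingWork (h : R) (C : Matrix ι ι R) (w : ι → R) : R :=
  -(h * (w ⬝ᵥ C *ᵥ w))

/-- One step of the Moreau–Jean scheme from `(q, v)` to `(q', v')` under the force `F` and the
contact impulse `P`. The intermediate values `x_{k+θ}` are encoded as `lineMap x x' θ`. -/
structure IsMoreauJeanStep (h θ : R) (M K C : Matrix ι ι R) (G : Matrix ι κ R)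
    (q q' v v' F : ι → R) (P : κ → R) : Prop where
  momentum : M *ᵥ (v' - v) + h • K *ᵥ lineMap q q' θ + h • C *ᵥ lineMap v v' θ - h • F = G *ᵥ P
  position : q' = q + h • lineMap v v' θ

variable {h θ : R} {M K C : Matrix ι ι R} {G : Matrix ι κ R} {q q' v v' F : ι → R} {P : κ → R}

theorem IsMoreauJeanStep.dotProduct_momentum
    (hs : IsMoreauJeanStep h θ M K C G q q' v v' F P) (hK : K.IsSymm) :
    lineMap v v' θ ⬝ᵥ M *ᵥ (v' - v) + lineMap q q' θ ⬝ᵥ K *ᵥ (q' - q) =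
      externalWork h F (lineMap v v' θ) + dampingWork h C (lineMap v v' θ)
        + lineMap (Gᵀ *ᵥ v) (Gᵀ *ᵥ v') θ ⬝ᵥ P := by
  have hstiff : lineMap q q' θ ⬝ᵥ K *ᵥ (q' - q) = h * (lineMap v v' θ ⬝ᵥ K *ᵥ lineMap q q' θ) := by
    rw [dotProduct_mulVec_comm_of_isSymm hK, sub_eq_iff_eq_add'.2 hs.position, smul_dotProduct,
      smul_eq_mul]
  have himpulse : lineMap (Gᵀ *ᵥ v) (Gᵀ *ᵥ v') θ ⬝ᵥ P = lineMap v v' θ ⬝ᵥ G *ᵥ P := by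
    rw [← mulVec_lineMap, dotProduct_comm, dotProduct_transpose_mulVec]
  rw [hstiff, himpulse, ← hs.momentum]
  simp only [externalWork, dampingWork, dotProduct_add, dotProduct_sub, dotProduct_smul,
    smul_eq_mul]
  ring

end Step

variable [Field R]

/-- Total mechanical energy of the state `(q, v)`, for the mass matrix `M` and the stiffness
matrix `K`. -/
def mechanicalEnergy (M K : Matrix ι ι R) (q v : ι → R) : R :=
  1 / 2 * (v ⬝ᵥ M *ᵥ v) + 1 / 2 * (q ⬝ᵥ K *ᵥ q)

variable {h θ : R} {M K C : Matrix ι ι R} {G : Matrix ι κ R} {q q' v v' F : ι → R} {P : κ → R}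

namespace IsMoreauJeanStep

theorem mechanicalEnergy_sub_eq [NeZero (2 : R)]
    (hs : IsMoreauJeanStep h θ M K C G q q' v v' F P) (hM : M.IsSymm) (hK : K.IsSymm) :
    mechanicalEnergy M K q' v' - mechanicalEnergy M K q v =
      externalWork h F (lineMap v v' θ) + dampingWork h C (lineMap v v' θ)
        + lineMap (Gᵀ *ᵥ v) (Gᵀ *ᵥ v') θ ⬝ᵥ P
        + (1 / 2 - θ) * ((v' - v) ⬝ᵥ M *ᵥ (v' - v) + (q' - q) ⬝ᵥ K *ᵥ (q' - q)) := by
  have hkinetic := dotProduct_mulVec_self_sub_eq_lineMap hM θ v v'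
  have hpotential := dotProduct_mulVec_self_sub_eq_lineMap hK θ q q'
  rw [← hs.dotProduct_momentum hK, mechanicalEnergy, mechanicalEnergy]
  field_simp
  linear_combination hkinetic + hpotential

variable [LinearOrder R] [IsStrictOrderedRing R] [StarRing R] [TrivialStar R]

theorem mechanicalEnergy_sub_le (hs : IsMoreauJeanStep h θ M K C G q q' v v' F P)
    (hM : M.PosSemidef) (hK : K.PosSemidef) (hθ : 1 / 2 ≤ θ) :
    mechanicalEnergy M K q' v' - mechanicalEnergy M K q v ≤
      externalWork h F (lineMap v v' θ) + dampingWork h C (lineMap v v' θ)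
        + lineMap (Gᵀ *ᵥ v) (Gᵀ *ᵥ v') θ ⬝ᵥ P := by
  have hMv : 0 ≤ (v' - v) ⬝ᵥ M *ᵥ (v' - v) := by
    simpa only [star_trivial] using hM.dotProduct_mulVec_nonneg (v' - v)
  have hKq : 0 ≤ (q' - q) ⬝ᵥ K *ᵥ (q' - q) := by
    simpa only [star_trivial] using hK.dotProduct_mulVec_nonneg (q' - q)
  rw [hs.mechanicalEnergy_sub_eq (isHermitian_iff_isSymm.1 hM.isHermitian)
    (isHermitian_iff_isSymm.1 hK.isHermitian)]
  exact add_le_of_nonpos_right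
    (mul_nonpos_of_nonpos_of_nonneg (sub_nonpos.2 hθ) (add_nonneg hMv hKq))

end IsMoreauJeanStep

theorem moreau_jean_dissipates_general [LinearOrder R] [IsStrictOrderedRing R] [StarRing R]
    [TrivialStar R] (hs : IsMoreauJeanStep h θ M K C G q q' v v' F P)
    (hM : M.PosSemidef) (hK : K.PosSemidef) {e : κ → R} {I : Set κ}
    (hPout : ∀ α ∉ I, P α = 0) (hU : ∀ α ∈ I, (Gᵀ *ᵥ v) α ≤ 0) (hP : ∀ α ∈ I, 0 ≤ P α)
    (hcompl : ∀ α ∈ I, ((Gᵀ *ᵥ v') α + e α * (Gᵀ *ᵥ v) α) * P α = 0)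
    (hθ : 1 / 2 ≤ θ) (hθe : ∀ α ∈ I, θ ≤ 1 / (1 + e α)) :
    mechanicalEnergy M K q' v' - mechanicalEnergy M K q v ≤
      externalWork h F (lineMap v v' θ) + dampingWork h C (lineMap v v' θ) := by
  have hθe' : ∀ α ∈ I, θ * (1 + e α) ≤ 1 := fun α hα ↦
    mul_le_one_of_le_one_div (one_half_pos.trans_le hθ) (hθe α hα)
  exact (hs.mechanicalEnergy_sub_le hM hK hθ).trans <| add_le_of_nonpos_right <|
    lineMap_dotProduct_nonpos_of_restitution hθe' hU hP hcompl hPout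

/-- The Moreau–Jean scheme dissipates energy when `1/2 ≤ θ ≤ 1/(1+eα)` for all contacts. -/
theorem moreau_jean_dissipates
    (n m : ℕ) (hn : 1 ≤ n) (hm : 1 ≤ m)
    (h θ : ℝ) (hh : 0 < h) (hθ0 : 0 ≤ θ) (hθ1 : θ ≤ 1)
    (M K C : Matrix (Fin n) (Fin n) ℝ) (G : Matrix (Fin n) (Fin m) ℝ)
    (hM : M.PosDef) (hK : K.PosSemidef)
    (qk qk1 vk vk1 Fθ : Fin n → ℝ) (P : Fin m → ℝ)
    (heq : M.mulVec (vk1 - vk) + h • K.mulVec ((1 - θ) • qk + θ • qk1)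
        + h • C.mulVec ((1 - θ) • vk + θ • vk1) - h • Fθ = G.mulVec P)
    (hq : qk1 = qk + h • ((1 - θ) • vk + θ • vk1))
    (e : Fin m → ℝ) (I₁ : Finset (Fin m))
    (he : ∀ α, 0 ≤ e α ∧ e α ≤ 1)
    (hPout : ∀ α ∉ I₁, P α = 0)
    (hc : ∀ α ∈ I₁, Gᵀ.mulVec vk α ≤ 0
        ∧ 0 ≤ Gᵀ.mulVec vk1 α + e α * Gᵀ.mulVec vk α
        ∧ 0 ≤ P α
        ∧ (Gᵀ.mulVec vk1 α + e α * Gᵀ.mulVec vk α) * P α = 0)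
    (hθhalf : 1/2 ≤ θ) (hθe : ∀ α ∈ I₁, θ ≤ 1 / (1 + e α)) :
    (1/2 * (vk1 ⬝ᵥ M.mulVec vk1) + 1/2 * (qk1 ⬝ᵥ K.mulVec qk1))
      - (1/2 * (vk ⬝ᵥ M.mulVec vk) + 1/2 * (qk ⬝ᵥ K.mulVec qk))
    ≤ h * (((1 - θ) • vk + θ • vk1) ⬝ᵥ Fθ)
      + (-(h * (((1 - θ) • vk + θ • vk1) ⬝ᵥ C.mulVec ((1 - θ) • vk + θ • vk1)))) := by
  simp only [← lineMap_apply_module] at heq hq ⊢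
  exact moreau_jean_dissipates_general ⟨heq, hq⟩ hM.posSemidef hK (I := I₁) hPout
    (fun α hα ↦ (hc α hα).1) (fun α hα ↦ (hc α hα).2.2.1) (fun α hα ↦ (hc α hα).2.2.2) hθhalf hθe
end

section
/- If local velocities U_k, U_{k+1} ∈ ℝᵐ and an impulse P_{k+1} ∈ ℝᵐ satisfy the discrete contact conditions, then −P_{k+1}ᵀ(U_{k+1}−U_k) = Σ_{α ∈ I₁} (1+e^α) P^α_{k+1} U^α_k ≤ 0. -/
open Matrix BigOperators

section Support

variable {ι R : Type*} [Fintype ι] [NonUnitalNonAssocSemiring R]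

theorem dotProduct_eq_sum_of_eq_zero_of_notMem {v : ι → R} {s : Finset ι}
    (hv : ∀ i ∉ s, v i = 0) (w : ι → R) :
    v ⬝ᵥ w = ∑ i ∈ s, v i * w i :=
  (Finset.sum_subset (Finset.subset_univ s) fun i _ hi ↦ by rw [hv i hi, zero_mul]).symm

end Support

section ContactLaw

variable {ι R : Type*} [CommRing R]

theorem neg_mul_sub_eq_of_add_mul_mul_eq_zero {u u' e p : R} (h : (u' + e * u) * p = 0) :
    -(p * (u' - u)) = (1 + e) * p * u := by
  linear_combination -h

theorem neg_dotProduct_sub_eq_sum_of_complementarity [Fintype ι]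
    {u u' e p : ι → R} {s : Finset ι} (hp : ∀ i ∉ s, p i = 0)
    (hcompl : ∀ i ∈ s, (u' i + e i * u i) * p i = 0) :
    -(p ⬝ᵥ (u' - u)) = ∑ i ∈ s, (1 + e i) * p i * u i := by
  rw [dotProduct_eq_sum_of_eq_zero_of_notMem hp, ← Finset.sum_neg_distrib]
  exact Finset.sum_congr rfl fun i hi ↦ neg_mul_sub_eq_of_add_mul_mul_eq_zero (hcompl i hi)

variable [PartialOrder R] [IsOrderedRing R]

theorem sum_one_add_mul_mul_nonpos {u e p : ι → R} {s : Finset ι}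
    (he : ∀ i ∈ s, -1 ≤ e i) (hp : ∀ i ∈ s, 0 ≤ p i) (hu : ∀ i ∈ s, u i ≤ 0) :
    ∑ i ∈ s, (1 + e i) * p i * u i ≤ 0 :=
  Finset.sum_nonpos fun i hi ↦
    have one_add_nonneg : 0 ≤ 1 + e i := neg_le_iff_add_nonneg'.mp (he i hi)
    mul_nonpos_of_nonneg_of_nonpos (mul_nonneg one_add_nonneg (hp i hi)) (hu i hi)

theorem discrete_contact_velocity_jump_work_general [Fintype ι]
    {u u' e p : ι → R} {s : Finset ι}
    (he : ∀ i ∈ s, -1 ≤ e i) (hp_off : ∀ i ∉ s, p i = 0)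
    (hu : ∀ i ∈ s, u i ≤ 0) (hp : ∀ i ∈ s, 0 ≤ p i)
    (hcompl : ∀ i ∈ s, (u' i + e i * u i) * p i = 0) :
    -(p ⬝ᵥ (u' - u)) = ∑ i ∈ s, (1 + e i) * p i * u i ∧ -(p ⬝ᵥ (u' - u)) ≤ 0 :=
  have work_eq := neg_dotProduct_sub_eq_sum_of_complementarity hp_off hcompl
  ⟨work_eq, work_eq.trans_le (sum_one_add_mul_mul_nonpos he hp hu)⟩

end ContactLaw

/-- Under the discrete contact conditions,
`−P_{k+1}ᵀ(U_{k+1}−U_k) = Σ_{α ∈ I₁} (1+eα) P_{k+1}α U_kα ≤ 0`. -/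
theorem discrete_contact_velocity_jump_work
    (m : ℕ) (hm : 1 ≤ m)
    (Uk Uk1 P : Fin m → ℝ)
    (e : Fin m → ℝ) (I₁ : Finset (Fin m))
    (he : ∀ α, 0 ≤ e α ∧ e α ≤ 1)
    (hPout : ∀ α ∉ I₁, P α = 0)
    (hc : ∀ α ∈ I₁, Uk α ≤ 0
        ∧ 0 ≤ Uk1 α + e α * Uk α
        ∧ 0 ≤ P α
        ∧ (Uk1 α + e α * Uk α) * P α = 0) :
    -(P ⬝ᵥ (Uk1 - Uk)) = ∑ α ∈ I₁, (1 + e α) * P α * Uk α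
    ∧ -(P ⬝ᵥ (Uk1 - Uk)) ≤ 0 :=
  discrete_contact_velocity_jump_work_general (fun α _ ↦ neg_one_lt_zero.le.trans (he α).1) hPout
    (fun α hα ↦ (hc α hα).1) (fun α hα ↦ (hc α hα).2.2.1) (fun α hα ↦ (hc α hα).2.2.2)
end
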